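/- Let g be a Markov interval map with g(Γ ∩ dom(g)) ⊆ Γ, let x ∈ E_g, and suppose the index i ∈ {1,…,n} satisfies â_{i ι(x)} = 0, i.e., (int I_i) ∩ g⁻¹(E_{ι(x)}) = ∅. Then I_i ∩ X = {y ∈ I_i : g(y) ∈ I_l ∩ X for some l with a_{il} = 1}. -/

import Mathlib

open Set Function

section

/-- The domain `⋃_{j<n} I_j` of a Markov interval map, where `I_j = [a j, b j]`
(indices `j = 0, …, n-1` correspond to the intervals `I_1, …, I_n` of the paper). -/
def mDom (n : ℕ) (a b : ℕ → ℝ) : Set ℝ := ⋃ j, ⋃ (_ : j < n), Icc (a j) (b j)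

/-- The union of the (possibly empty) escape intervals `E_j = (b j, a (j+1))`,
for `j + 1 < n`. -/
def mEsc (n : ℕ) (a b : ℕ → ℝ) : Set ℝ := ⋃ j, ⋃ (_ : j + 1 < n), Ioo (b j) (a (j + 1))

/-- The set `Γ` of boundary points of the intervals `I_j = [a j, b j]`. -/
def mGamma (n : ℕ) (a b : ℕ → ℝ) : Set ℝ := {y | ∃ j < n, y = a j ∨ y = b j}

/-- `g^k(x)` is defined: the iterates `x, g(x), …, g^(k-1)(x)` all lie in the domain. -/
def IterDef (g : ℝ → ℝ) (Dm : Set ℝ) (k : ℕ) (x : ℝ) : Prop := ∀ m < k, g^[m] x ∈ Dm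

/-- `g` is a Markov interval map for the partition `I_j = [a j, b j]`, `j < n`, of the
interval `I = [a 0, b (n-1)]` minus the escape intervals `E_j = (b j, a (j+1))`:
on each `I_j`, `g` is continuous and strictly monotone, `im g = I`, and `g(I_i) ∩ dom g`
is a nonempty union of intervals of the partition (Markov property).  (Values of `g`
outside of its domain `⋃_j I_j` are irrelevant.) -/
structure IsMarkovMap (n : ℕ) (a b : ℕ → ℝ) (g : ℝ → ℝ) : Prop where
  two_le : 2 ≤ n
  lt : ∀ j < n, a j < b j
  le : ∀ j, j + 1 < n → b j ≤ a (j + 1)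
  mono : ∀ i < n, StrictMonoOn g (Icc (a i) (b i)) ∨ StrictAntiOn g (Icc (a i) (b i))
  cont : ∀ i < n, ContinuousOn g (Icc (a i) (b i))
  im : g '' mDom n a b = Icc (a 0) (b (n - 1))
  markov : ∀ i < n, ∃ S : Finset ℕ, S.Nonempty ∧ (∀ j ∈ S, j < n) ∧
    g '' Icc (a i) (b i) ∩ mDom n a b = ⋃ j ∈ S, Icc (a j) (b j)

/-- The transition matrix entry `a_{ij} = 1`, i.e. `g(int I_i) ⊇ int I_j`. -/
def TransOne (a b : ℕ → ℝ) (g : ℝ → ℝ) (i j : ℕ) : Prop :=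
  Ioo (a j) (b j) ⊆ g '' Ioo (a i) (b i)

/-- Given the final escape point `ex = e(x)` of the orbit of a point `x` of the escape
set, the set `X = {z ∈ I : g^k(z) = e(x)` for some `k ≥ 0}`. -/
def orbitSet (n : ℕ) (a b : ℕ → ℝ) (g : ℝ → ℝ) (ex : ℝ) : Set ℝ :=
  {z | z ∈ Icc (a 0) (b (n - 1)) ∧ ∃ k, IterDef g (mDom n a b) k z ∧ g^[k] z = ex}

/-! A point `y ∈ I_i` reaches `e` if and only if `g y` does, because `e ∉ dom g`. If `g y`
reaches `e`, then either `g y = e` or `g y ∈ dom g`. The first case is impossible: `e` is not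
the image of an interior point of `I_i` by assumption, and it is not the image of an endpoint
since endpoints are mapped into `Γ ⊆ dom g`. So `g y ∈ dom g`, and the Markov property gives
`g y ∈ I_l ⊆ g(I_i)` for some `l`. As `int I_l` misses `Γ`, its points are the images of
interior points of `I_i`, that is, `a_{il} = 1`. -/

/-- The intervals `[a j, b j]`, `j < n`, are listed from left to right and overlap
at most in endpoints; intervals reduced to a point are allowed. -/
structure IsIntervalChain {α : Type*} [Preorder α] (n : ℕ) (a b : ℕ → α) : Prop where
  left_le_right : ∀ j < n, a j ≤ b j
  right_le_left_succ : ∀ j, j + 1 < n → b j ≤ a (j + 1)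

namespace IsIntervalChain

section Preorder

variable {α : Type*} [Preorder α] {n : ℕ} {a b : ℕ → α} {j l : ℕ}

theorem right_le_left (h : IsIntervalChain n a b) (hjl : j < l) (hl : l < n) : b j ≤ a l := by
  induction l, Nat.succ_le_of_lt hjl using Nat.le_induction with
  | base => exact h.right_le_left_succ j hl
  | succ l hsucc ih =>
    calc b j ≤ a l := ih (Nat.lt_of_succ_le hsucc) (by omega)
      _ ≤ b l := h.left_le_right l (by omega)
      _ ≤ a (l + 1) := h.right_le_left_succ l hl

theorem left_le_left (h : IsIntervalChain n a b) (hjl : j ≤ l) (hl : l < n) : a j ≤ a l := by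
  rcases hjl.eq_or_lt with rfl | hlt
  · exact le_rfl
  · exact (h.left_le_right j (hlt.trans hl)).trans (h.right_le_left hlt hl)

theorem right_le_right (h : IsIntervalChain n a b) (hjl : j ≤ l) (hl : l < n) : b j ≤ b l := by
  rcases hjl.eq_or_lt with rfl | hlt
  · exact le_rfl
  · exact (h.right_le_left hlt hl).trans (h.left_le_right l hl)

end Preorder

variable {n : ℕ} {a b : ℕ → ℝ}

theorem mDom_subset_Icc (h : IsIntervalChain n a b) : mDom n a b ⊆ Icc (a 0) (b (n - 1)) :=
  iUnion₂_subset fun j hj ↦ Icc_subset_Icc (h.left_le_left j.zero_le hj)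
    (h.right_le_right (by omega) (by omega))

theorem mGamma_subset_mDom (h : IsIntervalChain n a b) : mGamma n a b ⊆ mDom n a b := by
  rintro y ⟨j, hj, rfl | rfl⟩
  · exact mem_iUnion₂_of_mem hj (left_mem_Icc.2 (h.left_le_right j hj))
  · exact mem_iUnion₂_of_mem hj (right_mem_Icc.2 (h.left_le_right j hj))

theorem notMem_mDom_of_mem_gap (h : IsIntervalChain n a b) {k : ℕ} (hk : k + 1 < n) {e : ℝ}
    (he : e ∈ Ioo (b k) (a (k + 1))) : e ∉ mDom n a b := by
  simp only [mDom, mem_iUnion, not_exists]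
  intro j hj hej
  rcases Nat.lt_or_ge k j with hkj | hjk
  · exact (he.2.trans_le (h.left_le_left hkj hj)).not_ge hej.1
  · exact ((h.right_le_right hjk (by omega)).trans_lt he.1).not_ge hej.2

theorem notMem_mGamma_of_mem_Ioo (h : IsIntervalChain n a b) {l : ℕ} (hl : l < n) {z : ℝ}
    (hz : z ∈ Ioo (a l) (b l)) : z ∉ mGamma n a b := by
  rintro ⟨j, hj, hzj⟩
  have hab : a j ≤ b j := h.left_le_right j hj
  rcases lt_trichotomy j l with hjl | rfl | hlj
  · have hba : b j ≤ a l := h.right_le_left hjl hl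
    rcases hzj with rfl | rfl
    · exact (hab.trans hba).not_gt hz.1
    · exact hba.not_gt hz.1
  · exact hzj.elim hz.1.ne' hz.2.ne
  · have hba : b l ≤ a j := h.right_le_left hlj hj
    rcases hzj with rfl | rfl
    · exact hba.not_gt hz.2
    · exact (hba.trans hab).not_gt hz.2

theorem transOne_of_Ioo_subset_image_Icc (h : IsIntervalChain n a b) {g : ℝ → ℝ} {i l : ℕ}
    (hl : l < n) (hga : g (a i) ∈ mGamma n a b) (hgb : g (b i) ∈ mGamma n a b)
    (hsub : Ioo (a l) (b l) ⊆ g '' Icc (a i) (b i)) : TransOne a b g i l := by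
  intro z hz
  obtain ⟨w, hw, rfl⟩ := hsub hz
  have hgw : g w ∉ mGamma n a b := h.notMem_mGamma_of_mem_Ioo hl hz
  have hwa : a i ≠ w := by rintro rfl; exact hgw hga
  have hwb : w ≠ b i := by rintro rfl; exact hgw hgb
  exact ⟨w, ⟨hw.1.lt_of_ne hwa, hw.2.lt_of_ne hwb⟩, rfl⟩

end IsIntervalChain

/-- The points whose orbit under the partial map `g` with domain `D` reaches `e`, in finitely
many and possibly zero steps. -/
def backwardOrbit (g : ℝ → ℝ) (D : Set ℝ) (e : ℝ) : Set ℝ :=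
  {z | ∃ k, IterDef g D k z ∧ g^[k] z = e}

section BackwardOrbit

variable {g : ℝ → ℝ} {D : Set ℝ} {e y : ℝ}

theorem iterDef_succ {k : ℕ} : IterDef g D (k + 1) y ↔ y ∈ D ∧ IterDef g D k (g y) :=
  Nat.forall_lt_succ_left

theorem backwardOrbit_subset_insert : backwardOrbit g D e ⊆ insert e D := by
  rintro z ⟨_ | k, hdef, hz⟩
  · exact Or.inl hz
  · exact Or.inr (iterDef_succ.1 hdef).1

theorem mem_backwardOrbit_iff_map_mem (he : e ∉ D) (hy : y ∈ D) :
    y ∈ backwardOrbit g D e ↔ g y ∈ backwardOrbit g D e := by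
  constructor
  · rintro ⟨_ | k, hdef, hk⟩
    · exact absurd (hk ▸ hy) he
    · exact ⟨k, (iterDef_succ.1 hdef).2, hk⟩
  · rintro ⟨k, hdef, hk⟩
    exact ⟨k + 1, iterDef_succ.2 ⟨hy, hdef⟩, hk⟩

theorem IsIntervalChain.mem_orbitSet_iff {n : ℕ} {a b : ℕ → ℝ} (h : IsIntervalChain n a b)
    (hy : y ∈ mDom n a b) : y ∈ orbitSet n a b g e ↔ y ∈ backwardOrbit g (mDom n a b) e :=
  and_iff_right (h.mDom_subset_Icc hy)

end BackwardOrbit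

theorem notMem_image_Icc_of_notMem_image_Ioo {α β : Type*} [PartialOrder α] {f : α → β}
    {u v : α} {e : β} (hu : f u ≠ e) (hv : f v ≠ e) (he : e ∉ f '' Ioo u v) :
    e ∉ f '' Icc u v := by
  rintro ⟨y, hy, rfl⟩
  rcases eq_endpoints_or_mem_Ioo_of_mem_Icc hy with rfl | rfl | hy
  · exact hu rfl
  · exact hv rfl
  · exact he (mem_image_of_mem f hy)

namespace IsMarkovMap

variable {n : ℕ} {a b : ℕ → ℝ} {g : ℝ → ℝ}

theorem isIntervalChain (hg : IsMarkovMap n a b g) : IsIntervalChain n a b :=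
  ⟨fun j hj ↦ (hg.lt j hj).le, hg.le⟩

theorem exists_Icc_subset_image (hg : IsMarkovMap n a b g) {i : ℕ} (hi : i < n) {z : ℝ}
    (hz : z ∈ g '' Icc (a i) (b i) ∩ mDom n a b) :
    ∃ l < n, z ∈ Icc (a l) (b l) ∧ Icc (a l) (b l) ⊆ g '' Icc (a i) (b i) := by
  obtain ⟨S, -, hSn, hS⟩ := hg.markov i hi
  obtain ⟨l, hlS, hzl⟩ := mem_iUnion₂.1 (hS.subset hz)
  exact ⟨l, hSn l hlS, hzl,
    (subset_biUnion_of_mem (u := fun j ↦ Icc (a j) (b j)) hlS).trans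
      (hS.superset.trans inter_subset_left)⟩

end IsMarkovMap

theorem statement11_general {n : ℕ} {a b : ℕ → ℝ} (h : IsIntervalChain n a b) {g : ℝ → ℝ}
    {i : ℕ} (hi : i < n) (hga : g (a i) ∈ mGamma n a b) (hgb : g (b i) ∈ mGamma n a b)
    (hmarkov : ∀ z ∈ g '' Icc (a i) (b i) ∩ mDom n a b,
      ∃ l < n, z ∈ Icc (a l) (b l) ∧ Icc (a l) (b l) ⊆ g '' Icc (a i) (b i))
    {e : ℝ} (he : e ∉ mDom n a b) (hei : e ∉ g '' Ioo (a i) (b i)) :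
    Icc (a i) (b i) ∩ orbitSet n a b g e =
      {y | y ∈ Icc (a i) (b i) ∧ ∃ l < n, TransOne a b g i l ∧
        g y ∈ Icc (a l) (b l) ∩ orbitSet n a b g e} := by
  ext y
  refine and_congr_right fun hy ↦ ?_
  have hyD : y ∈ mDom n a b := mem_iUnion₂_of_mem hi hy
  rw [h.mem_orbitSet_iff hyD, mem_backwardOrbit_iff_map_mem he hyD]
  constructor
  · intro hgy
    have ne_of_mem_mGamma {z : ℝ} (hz : z ∈ mGamma n a b) : z ≠ e :=
      ne_of_mem_of_not_mem (h.mGamma_subset_mDom hz) he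
    have he_image : e ∉ g '' Icc (a i) (b i) := notMem_image_Icc_of_notMem_image_Ioo
      (ne_of_mem_mGamma hga) (ne_of_mem_mGamma hgb) hei
    have hgyi : g y ∈ g '' Icc (a i) (b i) := mem_image_of_mem g hy
    have hgyD : g y ∈ mDom n a b :=
      (backwardOrbit_subset_insert hgy).resolve_left (ne_of_mem_of_not_mem hgyi he_image)
    obtain ⟨l, hl, hgyl, hsub⟩ := hmarkov (g y) ⟨hgyi, hgyD⟩
    exact ⟨l, hl, h.transOne_of_Ioo_subset_image_Icc hl hga hgb (Ioo_subset_Icc_self.trans hsub),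
      hgyl, (h.mem_orbitSet_iff hgyD).2 hgy⟩
  · rintro ⟨-, -, -, -, -, hgy⟩
    exact hgy

/-- Let `g` be a Markov interval map with `g(Γ ∩ dom g) ⊆ Γ`, let
`x ∈ E_g` with final escape point `e(x) = g^[τx] x ∈ E_{kι}` (`kι = ι(x)`), and suppose
that the index `i` satisfies `â_{i ι(x)} = 0`, i.e. `(int I_i) ∩ g⁻¹(E_{ι(x)}) = ∅`.
Then `I_i ∩ X = {y ∈ I_i : g(y) ∈ I_l ∩ X` for some `l` with `a_{il} = 1}`. -/
theorem statement11 (n : ℕ) (a b : ℕ → ℝ) (g : ℝ → ℝ) (hg : IsMarkovMap n a b g)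
    (hΓ : ∀ y ∈ mGamma n a b ∩ mDom n a b, g y ∈ mGamma n a b)
    (x : ℝ) (hxI : x ∈ Icc (a 0) (b (n - 1)))
    (τx : ℕ) (hτ1 : 1 ≤ τx) (hτdef : IterDef g (mDom n a b) τx x)
    (hτesc : g^[τx] x ∈ mEsc n a b)
    (hτmin : ∀ k, 1 ≤ k → IterDef g (mDom n a b) k x → g^[k] x ∈ mEsc n a b → τx ≤ k)
    (kι : ℕ) (hkι : kι + 1 < n) (hexE : g^[τx] x ∈ Ioo (b kι) (a (kι + 1)))
    (i : ℕ) (hi : i < n)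
    (hai : Ioo (a i) (b i) ∩ g ⁻¹' (Ioo (b kι) (a (kι + 1))) = ∅) :
    Icc (a i) (b i) ∩ orbitSet n a b g (g^[τx] x) =
      {y | y ∈ Icc (a i) (b i) ∧ ∃ l < n, TransOne a b g i l ∧
        g y ∈ Icc (a l) (b l) ∩ orbitSet n a b g (g^[τx] x)} := by
  have h := hg.isIntervalChain
  have map_mem_mGamma {y : ℝ} (hy : y ∈ mGamma n a b) : g y ∈ mGamma n a b :=
    hΓ y ⟨hy, h.mGamma_subset_mDom hy⟩
  have hei : g^[τx] x ∉ g '' Ioo (a i) (b i) :=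
    (disjoint_image_left.2 (disjoint_iff_inter_eq_empty.2 hai)).notMem_of_mem_right hexE
  exact statement11_general h hi (map_mem_mGamma ⟨i, hi, Or.inl rfl⟩)
    (map_mem_mGamma ⟨i, hi, Or.inr rfl⟩) (fun _ ↦ hg.exists_Icc_subset_image hi)
    (h.notMem_mDom_of_mem_gap hkι hexE) hei

end
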